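/- Let V_x^1, V_x^2, V_y^1, V_y^2, Δ_xV_x^i, Δ_xxV_x^i, Δ_yV_y^i, Δ_yyV_y^i (i = 1,2) and Δ_xR^z, Δ_yR^z, Δ_xxR^z, Δ_yyR^z, Δ_xyR^z be real numbers. Define the third-order reconstruction V^x(x,y) = [V_x^1 + Δ_xV_x^1·x + Δ_xxV_x^1·(x² − 1/12)](1/2 − y) + [V_x^2 + Δ_xV_x^2·x + Δ_xxV_x^2·(x² − 1/12)](1/2 + y) + a_yy(1 − 4y²) + a_yyy·y(1 − 4y²) + a_xyy·x(1 − 4y²) and V^y(x,y) = [V_y^1 + Δ_yV_y^1·y + Δ_yyV_y^1·(y² − 1/12)](1/2 − x) + [V_y^2 + Δ_yV_y^2·y + Δ_yyV_y^2·(y² − 1/12)](1/2 + x) + b_xx(1 − 4x²) + b_xxx·x(1 − 4x²) + b_xxy·y(1 − 4x²), with coefficients b_xxx = (−Δ_xxR^z + Δ_xxV_x^1 − Δ_xxV_x^2)/12, a_yyy = (Δ_yyR^z + Δ_yyV_y^1 − Δ_yyV_y^2)/12, b_xx = (−Δ_xR^z + Δ_xV_x^1 − Δ_xV_x^2)/8,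 a_yy = (Δ_yR^z + Δ_yV_y^1 − Δ_yV_y^2)/8, and a_xyy = −b_xxy = Δ_xyR^z/16. Then for every (x,y) ∈ ℝ², ∂_x V^y − ∂_y V^x = (V_x^1 − V_x^2 + V_y^2 − V_y^1) + Δ_xR^z·x + Δ_yR^z·y + Δ_xxR^z·(x² − 1/12) + Δ_yyR^z·(y² − 1/12) + Δ_xyR^z·xy. -/

import Mathlib

/-- The x-component of the third-order 2D reconstruction (eqn. 2.10). -/
noncomputable def V3x (vx1 dx1 dxx1 vx2 dx2 dxx2 ayy ayyy axyy x y : ℝ) : ℝ :=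
  (vx1 + dx1 * x + dxx1 * (x ^ 2 - 1 / 12)) * (1 / 2 - y) +
    (vx2 + dx2 * x + dxx2 * (x ^ 2 - 1 / 12)) * (1 / 2 + y) +
    ayy * (1 - 4 * y ^ 2) + ayyy * y * (1 - 4 * y ^ 2) + axyy * x * (1 - 4 * y ^ 2)

/-- The y-component of the third-order 2D reconstruction (eqn. 2.10). -/
noncomputable def V3y (vy1 dy1 dyy1 vy2 dy2 dyy2 bxx bxxx bxxy x y : ℝ) : ℝ :=
  (vy1 + dy1 * y + dyy1 * (y ^ 2 - 1 / 12)) * (1 / 2 - x) +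
    (vy2 + dy2 * y + dyy2 * (y ^ 2 - 1 / 12)) * (1 / 2 + x) +
    bxx * (1 - 4 * x ^ 2) + bxxx * x * (1 - 4 * x ^ 2) + bxxy * y * (1 - 4 * x ^ 2)

/-!
In the direction transverse to its edges, each component is the linear interpolant of its two edge
profiles plus a linear function times the bubble `1 - 4 * s ^ 2`, which vanishes on both edges.
Differentiating the interpolant gives the difference of the edge profiles, and
`(s * (1 - 4 * s ^ 2))' = -12 * (s ^ 2 - 1 / 12)` has mean zero over the edge. The interior
coefficients therefore shift every moment of the curl except its mean, each independently, and
equation (2.13) solves for the shifts that produce the prescribed moments.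
-/

section TransverseProfile

variable {𝕜 : Type*} [NontriviallyNormedField 𝕜]

theorem hasDerivAt_edge_interpolant (c p q s : 𝕜) :
    HasDerivAt (fun t => p * (c - t) + q * (c + t)) (q - p) s :=
  ((((hasDerivAt_id' s).const_sub c).const_mul p).add
    (((hasDerivAt_id' s).const_add c).const_mul q)).congr_deriv (by ring)

theorem hasDerivAt_linear_mul_bubble (k α β s : 𝕜) :
    HasDerivAt (fun t => (α + β * t) * (1 - k * t ^ 2))
      (β * (1 - 3 * k * s ^ 2) - 2 * k * α * s) s := by
  have linear : HasDerivAt (fun t => α + β * t) (β * 1) s :=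
    ((hasDerivAt_id' s).const_mul β).const_add α
  have bubble : HasDerivAt (fun t => 1 - k * t ^ 2) (-(k * (2 * s))) s := by
    simpa using ((hasDerivAt_pow 2 s).const_mul k).const_sub 1
  exact (linear.mul bubble).congr_deriv (by ring)

end TransverseProfile

theorem hasDerivAt_V3x (vx1 dx1 dxx1 vx2 dx2 dxx2 ayy ayyy axyy x y : ℝ) :
    HasDerivAt (fun y' => V3x vx1 dx1 dxx1 vx2 dx2 dxx2 ayy ayyy axyy x y')
      ((vx2 + dx2 * x + dxx2 * (x ^ 2 - 1 / 12)) - (vx1 + dx1 * x + dxx1 * (x ^ 2 - 1 / 12)) -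
        8 * (ayy + axyy * x) * y - 12 * ayyy * (y ^ 2 - 1 / 12)) y := by
  have split (y' : ℝ) : V3x vx1 dx1 dxx1 vx2 dx2 dxx2 ayy ayyy axyy x y' =
      ((vx1 + dx1 * x + dxx1 * (x ^ 2 - 1 / 12)) * (1 / 2 - y') +
        (vx2 + dx2 * x + dxx2 * (x ^ 2 - 1 / 12)) * (1 / 2 + y')) +
        (ayy + axyy * x + ayyy * y') * (1 - 4 * y' ^ 2) := by
    unfold V3x
    ring
  simp only [split]
  exact ((hasDerivAt_edge_interpolant ..).add (hasDerivAt_linear_mul_bubble ..)).congr_deriv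
    (by ring)

theorem V3y_eq_V3x_swap (vy1 dy1 dyy1 vy2 dy2 dyy2 bxx bxxx bxxy x y : ℝ) :
    V3y vy1 dy1 dyy1 vy2 dy2 dyy2 bxx bxxx bxxy x y =
      V3x vy1 dy1 dyy1 vy2 dy2 dyy2 bxx bxxx bxxy y x :=
  rfl

theorem hasDerivAt_V3y (vy1 dy1 dyy1 vy2 dy2 dyy2 bxx bxxx bxxy x y : ℝ) :
    HasDerivAt (fun x' => V3y vy1 dy1 dyy1 vy2 dy2 dyy2 bxx bxxx bxxy x' y)
      ((vy2 + dy2 * y + dyy2 * (y ^ 2 - 1 / 12)) - (vy1 + dy1 * y + dyy1 * (y ^ 2 - 1 / 12)) -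
        8 * (bxx + bxxy * y) * x - 12 * bxxx * (x ^ 2 - 1 / 12)) x := by
  simpa only [V3y_eq_V3x_swap] using hasDerivAt_V3x vy1 dy1 dyy1 vy2 dy2 dyy2 bxx bxxx bxxy y x

theorem stmt_4_general
    (vx1 dx1 dxx1 vx2 dx2 dxx2 vy1 dy1 dyy1 vy2 dy2 dyy2 ayy ayyy axyy bxx bxxx bxxy x y : ℝ) :
    deriv (fun x' => V3y vy1 dy1 dyy1 vy2 dy2 dyy2 bxx bxxx bxxy x' y) x -
        deriv (fun y' => V3x vx1 dx1 dxx1 vx2 dx2 dxx2 ayy ayyy axyy x y') y =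
      (vx1 - vx2 + vy2 - vy1) + (dx1 - dx2 - 8 * bxx) * x + (dy2 - dy1 + 8 * ayy) * y +
        (dxx1 - dxx2 - 12 * bxxx) * (x ^ 2 - 1 / 12) +
        (dyy2 - dyy1 + 12 * ayyy) * (y ^ 2 - 1 / 12) + 8 * (axyy - bxxy) * (x * y) := by
  rw [(hasDerivAt_V3y ..).deriv, (hasDerivAt_V3x ..).deriv]
  ring

/-- with interior coefficients chosen as in eqn. (2.13), the curl
of the third-order 2D reconstruction matches the prescribed quadratic
circulation polynomial at every point. -/
theorem stmt_4
    (vx1 dx1 dxx1 vx2 dx2 dxx2 vy1 dy1 dyy1 vy2 dy2 dyy2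
      dxRz dyRz dxxRz dyyRz dxyRz ayy ayyy axyy bxx bxxx bxxy : ℝ)
    (hbxxx : bxxx = (-dxxRz + dxx1 - dxx2) / 12)
    (hayyy : ayyy = (dyyRz + dyy1 - dyy2) / 12)
    (hbxx : bxx = (-dxRz + dx1 - dx2) / 8)
    (hayy : ayy = (dyRz + dy1 - dy2) / 8)
    (haxyy : axyy = dxyRz / 16)
    (hbxxy : bxxy = -(dxyRz / 16)) :
    ∀ x y : ℝ,
      deriv (fun x' : ℝ => V3y vy1 dy1 dyy1 vy2 dy2 dyy2 bxx bxxx bxxy x' y) x -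
        deriv (fun y' : ℝ => V3x vx1 dx1 dxx1 vx2 dx2 dxx2 ayy ayyy axyy x y') y =
      (vx1 - vx2 + vy2 - vy1) + dxRz * x + dyRz * y +
        dxxRz * (x ^ 2 - 1 / 12) + dyyRz * (y ^ 2 - 1 / 12) + dxyRz * (x * y) := by
  intro x y
  rw [stmt_4_general, hbxxx, hayyy, hbxx, hayy, haxyy, hbxxy]
  ring
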